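/- (Closed form for bumpered billiard tables B2(5,n), odd case.) For every odd n ≥ 3 and all signs e ∈ {1,-1}^(2n-3): B_n(e₁,…,e_{2n-3}) = M(e₁,e₂,e₃)·∏_{m=1}^{(n-3)/2} K(e_{4m},e_{4m+1},e_{4m+2},e_{4m+3}) + Σ_{i=0}^{(n-3)/2} H_{n-1-2i}(e₁,…,e_{2n-4-4i})·a(e_{2n-3-4i})·∏_{m=1}^{i} K(e_{2n-2-4i+4(m-1)},e_{2n-1-4i+4(m-1)},e_{2n-4i+4(m-1)},e_{2n+1-4i+4(m-1)}) + Σ_{i=0}^{(n-5)/2} H_{n-2-2i}(e₁,…,e_{2n-6-4i})·L(e_{2n-5-4i},e_{2n-4-4i},e_{2n-3-4i})·∏_{m=1}^{i} K(e_{2n-2-4i+4(m-1)},e_{2n-1-4i+4(m-1)},e_{2n-4i+4(m-1)},e_{2n+1-4i+4(m-1)}). -/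

import Mathlib

/-!
For odd `n` the recursion for `B_n` deletes the crossing `e_{2n-5}`, encoded by overwriting it with
`e_{2n-4}`. This does not affect `H_{n-2}` and `B_{n-2}`, which read only the signs before it, so
unfolding the recursion twice gives the linear recurrence
`B_n = B_{n-2} K(e_{2n-6}, …, e_{2n-3}) + H_{n-1} a(e_{2n-3}) + H_{n-2} L(e_{2n-5}, …, e_{2n-3})`,
whose solution starting from `B_3 = M(e_1, e_2, e_3) + H_2 a(e_3)` is the closed form.
-/

open LaurentPolynomial Finset

noncomputable section

/-- The ring `ℤ[A, A⁻¹]` of Laurent polynomials over `ℤ`; the variable `A` is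
`LaurentPolynomial.T 1`, and `A^n = T n` for `n : ℤ`. -/
abbrev KR : Type := LaurentPolynomial ℤ

/-- `a ε = A^ε`. -/
def Ca (ε : ℤ) : KR := T ε

/-- `f₂ ε = -A^(-3ε)`. -/
def Cf₂ (ε : ℤ) : KR := -T (-3 * ε)

/-- `δ = -A² - A⁻²`. -/
def Cδ : KR := -T 2 - T (-2)

/-- `X(α,β) = δ·a(α)a(β) + a(α)a(-β) + a(-α)a(β)`. -/
def CX (α β : ℤ) : KR := Cδ * Ca α * Ca β + Ca α * Ca (-β) + Ca (-α) * Ca β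

/-- `g₂(α,β) = X(α,β) + δ·a(-α)a(-β)`, the Kauffman bracket of `T(4,2)`. -/
def Cg₂ (α β : ℤ) : KR := CX α β + Cδ * Ca (-α) * Ca (-β)

/-- `K(α,β,γ,η) = f₂(-α)f₂(-β)a(-γ)a(-η)`. -/
def CK (α β γ η : ℤ) : KR := Cf₂ (-α) * Cf₂ (-β) * Ca (-γ) * Ca (-η)

/-- `N(α,β,γ,η) = f₂(-α)a(-β)a(-γ)a(-η)`. -/
def CN (α β γ η : ℤ) : KR := Cf₂ (-α) * Ca (-β) * Ca (-γ) * Ca (-η)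

/-- `Ñ(α,β,γ,η) = a(-α)f₂(-β)a(-γ)a(-η)`. -/
def CNt (α β γ η : ℤ) : KR := Ca (-α) * Cf₂ (-β) * Ca (-γ) * Ca (-η)

/-- `R(α,β,γ,η) = f₂(-α)a(β)a(-γ)a(-η)`. -/
def CR (α β γ η : ℤ) : KR := Cf₂ (-α) * Ca β * Ca (-γ) * Ca (-η)

/-- `R̃(α,β,γ,η) = a(α)f₂(-β)a(-γ)a(-η)`. -/
def CRt (α β γ η : ℤ) : KR := Ca α * Cf₂ (-β) * Ca (-γ) * Ca (-η)

/-- `S(α,β,γ,η) = f₂(α)f₂(-β)a(-γ)a(-η)`. -/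
def CS (α β γ η : ℤ) : KR := Cf₂ α * Cf₂ (-β) * Ca (-γ) * Ca (-η)

/-- `L(α,β,γ) = f₂(-α)a(β)a(-γ)`. -/
def CL (α β γ : ℤ) : KR := Cf₂ (-α) * Ca β * Ca (-γ)

/-- `M(α,β,γ) = f₂(-α)f₂(β)a(-γ)`. -/
def CM (α β γ : ℤ) : KR := Cf₂ (-α) * Cf₂ β * Ca (-γ)

mutual
  /-- `H n e` is the Kauffman bracket of the Chebyshev billiard table diagram `T(5,n)`
  with crossing signs `e 1, …, e (2n-2)`. -/
  def Hb : ℕ → (ℕ → ℤ) → KR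
    | 0, _ => 1
    | 1, _ => 1
    | 2, e =>
        Ca (e 1) * Ca (e 2) + Cδ * Ca (e 1) * Ca (-e 2) + Cδ * Ca (-e 1) * Ca (e 2)
          + Cδ ^ 2 * Ca (-e 1) * Ca (-e 2)
    | m + 3, e =>
        Hb (m + 2) e * Ca (e (2 * m + 3)) * Ca (e (2 * m + 4))
          + Hb (m + 1) e * CK (e (2 * m + 1)) (e (2 * m + 2)) (e (2 * m + 3)) (e (2 * m + 4))
          + if (m + 3) % 2 = 1 then
              BTb (m + 2) e * Ca (e (2 * m + 3)) * Ca (-e (2 * m + 4))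
                + Bb (m + 2) (Function.update e (2 * m + 1) (e (2 * m + 2)))
                    * Cf₂ (-e (2 * m + 1)) * Ca (-e (2 * m + 3)) * Ca (e (2 * m + 4))
            else
              BTb (m + 2) e * Ca (-e (2 * m + 3)) * Ca (e (2 * m + 4))
                + Bb (m + 2) e * Cf₂ (-e (2 * m + 2)) * Ca (e (2 * m + 3)) * Ca (-e (2 * m + 4))
  termination_by n _ => n

  /-- `B n e` is the Kauffman bracket of the bumpered billiard table `B2(5,n)` with
  crossing signs `e 1, …, e (2n-3)`. -/
  def Bb : ℕ → (ℕ → ℤ) → KR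
    | 0, _ => 1
    | 1, _ => 1
    | 2, e => Cf₂ (e 1)
    | m + 3, e =>
        Hb (m + 2) e * Ca (e (2 * m + 3))
          + if (m + 3) % 2 = 1 then
              Bb (m + 2) (Function.update e (2 * m + 1) (e (2 * m + 2)))
                * Cf₂ (-e (2 * m + 1)) * Ca (-e (2 * m + 3))
            else
              Bb (m + 2) e * Cf₂ (-e (2 * m + 2)) * Ca (-e (2 * m + 3))
  termination_by n _ => n

  /-- `BT n e` is the Kauffman bracket of the bumpered billiard table `B1(5,n)` with its
  crossingless tangle closure, with crossing signs `e 1, …, e (2n-2)`. -/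
  def BTb : ℕ → (ℕ → ℤ) → KR
    | 0, _ => 1
    | 1, _ => 1
    | 2, e => Cg₂ (e 1) (e 2)
    | 3, e => Hb 2 e * CX (e 3) (e 4) + CS (e 1) (e 2) (e 3) (e 4)
    | 4, e =>
        Hb 3 e * CX (e 5) (e 6) + Hb 2 e * CR (e 3) (e 4) (e 5) (e 6)
          + Cg₂ (e 1) (e 2) * CN (e 3) (e 4) (e 5) (e 6)
    | m + 5, e =>
        Hb (m + 4) e * CX (e (2 * m + 7)) (e (2 * m + 8))
          + if (m + 5) % 2 = 1 then
              Hb (m + 3) e * CRt (e (2 * m + 5)) (e (2 * m + 6)) (e (2 * m + 7)) (e (2 * m + 8))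
                + BTb (m + 3) e * CNt (e (2 * m + 5)) (e (2 * m + 6)) (e (2 * m + 7)) (e (2 * m + 8))
            else
              Hb (m + 3) e * CR (e (2 * m + 5)) (e (2 * m + 6)) (e (2 * m + 7)) (e (2 * m + 8))
                + BTb (m + 3) e * CN (e (2 * m + 5)) (e (2 * m + 6)) (e (2 * m + 7)) (e (2 * m + 8))
  termination_by n _ => n
end

lemma apply_update_of_dependsOn {ι β : Type*} {α : ι → Type*} [DecidableEq ι]
    {f : (∀ i, α i) → β} {s : Set ι} (hf : DependsOn f s) {i : ι} (hi : i ∉ s)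
    (x : ∀ i, α i) (a : α i) : f (Function.update x i a) = f x :=
  hf fun _ hj => Function.update_of_ne (ne_of_mem_of_not_mem hj hi) _ _

lemma dependsOn_comp_update_apply {ι α β : Type*} [DecidableEq ι] {f : (ι → α) → β} {s : Set ι}
    (hf : DependsOn f s) (i j : ι) :
    DependsOn (fun x => f (Function.update x i (x j))) (insert j (s \ {i})) := by
  intro x y h
  refine hf fun k hk => ?_
  rcases eq_or_ne k i with rfl | hki
  · simpa using h j (Set.mem_insert j _)
  · simpa [hki] using h k (Set.mem_insert_of_mem j ⟨hk, hki⟩)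

lemma eq_mul_prod_add_sum_of_succ_eq {R : Type*} [CommSemiring R] {x b c : ℕ → R}
    (h : ∀ k, x (k + 1) = x k * c k + b (k + 1)) (k : ℕ) :
    x k = x 0 * ∏ j ∈ range k, c j
      + ∑ i ∈ range k, b (k - i) * ∏ m ∈ range i, c (k - i + m) := by
  induction k with
  | zero => simp
  | succ k ih =>
    have shift : ∀ i ∈ range k,
        b (k + 1 - (i + 1)) * ∏ m ∈ range (i + 1), c (k + 1 - (i + 1) + m)
          = b (k - i) * (∏ m ∈ range i, c (k - i + m)) * c k := by
      intro i hi
      rw [Nat.add_sub_add_right, prod_range_succ, Nat.sub_add_cancel (mem_range.mp hi).le,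
        mul_assoc]
    rw [h, ih, sum_range_succ', sum_congr rfl shift, prod_range_succ, ← sum_mul]
    simp only [Nat.sub_zero, range_zero, prod_empty, mul_one]
    ring

mutual

theorem dependsOn_Hb : ∀ n, DependsOn (Hb n) (Set.Icc 1 (2 * n - 2))
  | 0 => fun x y _ => by simp only [Hb]
  | 1 => fun x y _ => by simp only [Hb]
  | 2 => fun x y h => by simp only [Hb, h 1 (by simp), h 2 (by simp)]
  | m + 3 => by
    intro x y h
    replace h : ∀ i, 1 ≤ i → i ≤ 2 * m + 4 → x i = y i := fun i h₁ h₂ => h i ⟨h₁, by omega⟩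
    have hH₂ := dependsOn_Hb (m + 2) fun i hi => h i hi.1 (by grind)
    have hH₁ := dependsOn_Hb (m + 1) fun i hi => h i hi.1 (by grind)
    have hT := dependsOn_BTb (m + 2) fun i hi => h i hi.1 (by grind)
    have hB := dependsOn_Bb (m + 2) fun i hi => h i hi.1 (by grind)
    have hU := dependsOn_comp_update_apply (dependsOn_Bb (m + 2)) (2 * m + 1) (2 * m + 2)
      fun i hi => h i (by grind) (by grind)
    beta_reduce at hU
    rw [Hb, Hb, hH₂, hH₁, hT, hB, hU]
    rw [h (2 * m + 1), h (2 * m + 2), h (2 * m + 3), h (2 * m + 4)] <;> omega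

theorem dependsOn_Bb : ∀ n, DependsOn (Bb n) (Set.Icc 1 (2 * n - 3))
  | 0 => fun x y _ => by simp only [Bb]
  | 1 => fun x y _ => by simp only [Bb]
  | 2 => fun x y h => by simp only [Bb, h 1 (by simp)]
  | m + 3 => by
    intro x y h
    replace h : ∀ i, 1 ≤ i → i ≤ 2 * m + 3 → x i = y i := fun i h₁ h₂ => h i ⟨h₁, by omega⟩
    have hH := dependsOn_Hb (m + 2) fun i hi => h i hi.1 (by grind)
    have hB := dependsOn_Bb (m + 2) fun i hi => h i hi.1 (by grind)
    have hU := dependsOn_comp_update_apply (dependsOn_Bb (m + 2)) (2 * m + 1) (2 * m + 2)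
      fun i hi => h i (by grind) (by grind)
    beta_reduce at hU
    rw [Bb, Bb, hH, hB, hU]
    rw [h (2 * m + 1), h (2 * m + 2), h (2 * m + 3)] <;> omega

theorem dependsOn_BTb : ∀ n, DependsOn (BTb n) (Set.Icc 1 (2 * n - 2))
  | 0 => fun x y _ => by simp only [BTb]
  | 1 => fun x y _ => by simp only [BTb]
  | 2 => fun x y h => by simp only [BTb, h 1 (by simp), h 2 (by simp)]
  | 3 => by
    intro x y h
    have hH := dependsOn_Hb 2 fun i hi => h i (by grind)
    rw [BTb, BTb, hH]
    rw [h 1, h 2, h 3, h 4] <;> simp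
  | 4 => by
    intro x y h
    have hH₃ := dependsOn_Hb 3 fun i hi => h i (by grind)
    have hH₂ := dependsOn_Hb 2 fun i hi => h i (by grind)
    rw [BTb, BTb, hH₃, hH₂]
    rw [h 1, h 2, h 3, h 4, h 5, h 6] <;> simp
  | m + 5 => by
    intro x y h
    replace h : ∀ i, 1 ≤ i → i ≤ 2 * m + 8 → x i = y i := fun i h₁ h₂ => h i ⟨h₁, by omega⟩
    have hH₄ := dependsOn_Hb (m + 4) fun i hi => h i hi.1 (by grind)
    have hH₃ := dependsOn_Hb (m + 3) fun i hi => h i hi.1 (by grind)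
    have hT := dependsOn_BTb (m + 3) fun i hi => h i hi.1 (by grind)
    rw [BTb, BTb, hH₄, hH₃, hT]
    rw [h (2 * m + 5), h (2 * m + 6), h (2 * m + 7), h (2 * m + 8)] <;> omega

end

lemma Bb_three (e : ℕ → ℤ) : Bb 3 e = CM (e 1) (e 2) (e 3) + Hb 2 e * Ca (e 3) := by
  rw [Bb, if_pos (by norm_num), Bb, CM]
  simp only [Nat.mul_zero, Nat.zero_add, Function.update_self]
  ring

lemma Bb_two_mul_add_three (k : ℕ) (e : ℕ → ℤ) :
    Bb (2 * k + 3) e = Hb (2 * k + 2) e * Ca (e (4 * k + 3))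
      + Bb (2 * k + 2) (Function.update e (4 * k + 1) (e (4 * k + 2)))
        * Cf₂ (-e (4 * k + 1)) * Ca (-e (4 * k + 3)) := by
  rw [Bb, if_pos (by omega), show 2 * (2 * k) = 4 * k by ring]

lemma Bb_two_mul_add_four (k : ℕ) (e : ℕ → ℤ) :
    Bb (2 * k + 4) e = Hb (2 * k + 3) e * Ca (e (4 * k + 5))
      + Bb (2 * k + 3) e * Cf₂ (-e (4 * k + 4)) * Ca (-e (4 * k + 5)) := by
  rw [Bb, if_neg (by omega), show 2 * (2 * k + 1) = 4 * k + 2 by ring]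

lemma Bb_two_mul_add_five (k : ℕ) (e : ℕ → ℤ) :
    Bb (2 * k + 5) e
      = Bb (2 * k + 3) e * CK (e (4 * k + 4)) (e (4 * k + 5)) (e (4 * k + 6)) (e (4 * k + 7))
        + (Hb (2 * k + 4) e * Ca (e (4 * k + 7))
          + Hb (2 * k + 3) e * CL (e (4 * k + 5)) (e (4 * k + 6)) (e (4 * k + 7))) := by
  set e' := Function.update e (4 * k + 5) (e (4 * k + 6)) with he'
  have hH : Hb (2 * k + 3) e' = Hb (2 * k + 3) e :=
    apply_update_of_dependsOn (dependsOn_Hb _) (by grind) _ _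
  have hB : Bb (2 * k + 3) e' = Bb (2 * k + 3) e :=
    apply_update_of_dependsOn (dependsOn_Bb _) (by grind) _ _
  have h₄ : e' (4 * k + 4) = e (4 * k + 4) := Function.update_of_ne (by omega) _ _
  have h₅ : e' (4 * k + 5) = e (4 * k + 6) := Function.update_self ..
  have hodd := Bb_two_mul_add_three (k + 1) e
  rw [show 4 * (k + 1) = 4 * k + 4 by ring, show 2 * (k + 1) = 2 * k + 2 by ring] at hodd
  rw [hodd, ← he', Bb_two_mul_add_four, hH, hB, h₄, h₅, CL, CK]
  ring

lemma Bb_two_mul_add_three_eq_sum (k : ℕ) (e : ℕ → ℤ) :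
    Bb (2 * k + 3) e =
      CM (e 1) (e 2) (e 3) *
          ∏ m ∈ range k, CK (e (4 * m + 4)) (e (4 * m + 5)) (e (4 * m + 6)) (e (4 * m + 7))
        + (∑ i ∈ range (k + 1),
            Hb (2 * (k - i) + 2) e * Ca (e (4 * (k - i) + 3)) *
              ∏ m ∈ range i, CK (e (4 * (k - i + m) + 4)) (e (4 * (k - i + m) + 5))
                (e (4 * (k - i + m) + 6)) (e (4 * (k - i + m) + 7)))
        + ∑ i ∈ range k,
            Hb (2 * (k - i) + 1) e *
                CL (e (4 * (k - i) + 1)) (e (4 * (k - i) + 2)) (e (4 * (k - i) + 3)) *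
              ∏ m ∈ range i, CK (e (4 * (k - i + m) + 4)) (e (4 * (k - i + m) + 5))
                (e (4 * (k - i + m) + 6)) (e (4 * (k - i + m) + 7)) := by
  have hsum := eq_mul_prod_add_sum_of_succ_eq (x := fun k => Bb (2 * k + 3) e)
    (b := fun k => Hb (2 * k + 2) e * Ca (e (4 * k + 3))
      + Hb (2 * k + 1) e * CL (e (4 * k + 1)) (e (4 * k + 2)) (e (4 * k + 3)))
    (fun k => Bb_two_mul_add_five k e) k
  simp only [Nat.mul_zero, Nat.zero_add, Bb_three, add_mul, sum_add_distrib] at hsum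
  simp only [hsum, sum_range_succ, Nat.sub_self, Nat.mul_zero, Nat.zero_add]
  ring

theorem bumpered_B2_closed_form_odd_general (n : ℕ) (hn : 3 ≤ n) (hodd : n % 2 = 1)
    (e : ℕ → ℤ) :
    Bb n e =
      CM (e 1) (e 2) (e 3) *
          ∏ m ∈ Finset.range ((n - 3) / 2),
            CK (e (4 * m + 4)) (e (4 * m + 5)) (e (4 * m + 6)) (e (4 * m + 7))
        + (∑ i ∈ Finset.range ((n - 3) / 2 + 1),
            Hb (n - 1 - 2 * i) e * Ca (e (2 * n - 3 - 4 * i)) *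
              ∏ m ∈ Finset.range i,
                CK (e (2 * n - 2 - 4 * i + 4 * m)) (e (2 * n - 1 - 4 * i + 4 * m))
                  (e (2 * n - 4 * i + 4 * m)) (e (2 * n + 1 - 4 * i + 4 * m)))
        + ∑ i ∈ Finset.range ((n - 3) / 2),
            Hb (n - 2 - 2 * i) e *
                CL (e (2 * n - 5 - 4 * i)) (e (2 * n - 4 - 4 * i)) (e (2 * n - 3 - 4 * i)) *
              ∏ m ∈ Finset.range i,
                CK (e (2 * n - 2 - 4 * i + 4 * m)) (e (2 * n - 1 - 4 * i + 4 * m))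
                  (e (2 * n - 4 * i + 4 * m)) (e (2 * n + 1 - 4 * i + 4 * m)) := by
  obtain ⟨k, rfl⟩ : ∃ k, n = 2 * k + 3 := ⟨(n - 3) / 2, by omega⟩
  have hk : (2 * k + 3 - 3) / 2 = k := by omega
  rw [Bb_two_mul_add_three_eq_sum, hk]
  have hprod : ∀ i ≤ k, ∏ m ∈ range i, CK (e (4 * (k - i + m) + 4)) (e (4 * (k - i + m) + 5))
        (e (4 * (k - i + m) + 6)) (e (4 * (k - i + m) + 7)) =
      ∏ m ∈ range i, CK (e (2 * (2 * k + 3) - 2 - 4 * i + 4 * m))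
        (e (2 * (2 * k + 3) - 1 - 4 * i + 4 * m)) (e (2 * (2 * k + 3) - 4 * i + 4 * m))
        (e (2 * (2 * k + 3) + 1 - 4 * i + 4 * m)) := fun i hi =>
    prod_congr rfl fun m _ => by congr 2 <;> omega
  refine congrArg₂ _ (congrArg₂ _ rfl (sum_congr rfl fun i hi => ?_))
    (sum_congr rfl fun i hi => ?_)
  all_goals
    rw [mem_range] at hi
    rw [hprod i (by omega)]
    congr 5 <;> omega

/-- Closed form for the Kauffman bracket of the bumpered billiard tables `B2(5,n)`,
odd case. -/
theorem bumpered_B2_closed_form_odd (n : ℕ) (hn : 3 ≤ n) (hodd : n % 2 = 1)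
    (e : ℕ → ℤ) (he : ∀ i, e i = 1 ∨ e i = -1) :
    Bb n e =
      CM (e 1) (e 2) (e 3) *
          ∏ m ∈ Finset.range ((n - 3) / 2),
            CK (e (4 * m + 4)) (e (4 * m + 5)) (e (4 * m + 6)) (e (4 * m + 7))
        + (∑ i ∈ Finset.range ((n - 3) / 2 + 1),
            Hb (n - 1 - 2 * i) e * Ca (e (2 * n - 3 - 4 * i)) *
              ∏ m ∈ Finset.range i,
                CK (e (2 * n - 2 - 4 * i + 4 * m)) (e (2 * n - 1 - 4 * i + 4 * m))
                  (e (2 * n - 4 * i + 4 * m)) (e (2 * n + 1 - 4 * i + 4 * m)))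
        + ∑ i ∈ Finset.range ((n - 3) / 2),
            Hb (n - 2 - 2 * i) e *
                CL (e (2 * n - 5 - 4 * i)) (e (2 * n - 4 - 4 * i)) (e (2 * n - 3 - 4 * i)) *
              ∏ m ∈ Finset.range i,
                CK (e (2 * n - 2 - 4 * i + 4 * m)) (e (2 * n - 1 - 4 * i + 4 * m))
                  (e (2 * n - 4 * i + 4 * m)) (e (2 * n + 1 - 4 * i + 4 * m)) :=
  bumpered_B2_closed_form_odd_general n hn hodd e

end
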